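/- Let (k, [·,·]) be a real Lie algebra, gl(k) = End(k) with commutator [A,B] = A∘B − B∘A, and ad_u ∈ gl(k) the adjoint map ad_u(v) = [u,v]. Set g̃₋₁ := k and g̃₀ := k ⊕ gl(k), and define: l̃₁(m) := (m, −ad_m); l̃₂((u,A),m) := ½[u,m] + ½A(m); l̃₂((u,A),(v,B)) := ( [u,v] + ½(A(v) − B(u)), [ad_u,B] + [A,ad_v] + ½(ad_{B(u)} − ad_{A(v)}) + [A,B] ); l̃₃((u,A),(v,B),(w,C)) := −½( C([u,v]) + A([v,w]) + B([w,u]) ) − ¼( [A,B](w) + [B,C](u) + [C,A](v) ) − ¼( [u,B(w)] + [B(u),w] + [v,C(u)] + [C(v),u] + [w,A(v)] + [A(w),v] ). Then (g̃₀, g̃₋₁, l̃₁, l̃₂, l̃₃) is a 2-term L∞-algebra. -/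

import Mathlib

/-- A 2-term L∞-algebra over ℝ. -/
structure TwoTermLinfty (G0 G1 : Type*) [AddCommGroup G0] [Module ℝ G0]
    [AddCommGroup G1] [Module ℝ G1] where
  l1 : G1 →ₗ[ℝ] G0
  l2 : G0 →ₗ[ℝ] G0 →ₗ[ℝ] G0
  l2' : G0 →ₗ[ℝ] G1 →ₗ[ℝ] G1
  l3 : G0 →ₗ[ℝ] G0 →ₗ[ℝ] G0 →ₗ[ℝ] G1
  skew : ∀ x y, l2 x y = - l2 y x
  alt₁ : ∀ x y z, l3 x y z = - l3 y x z
  alt₂ : ∀ x y z, l3 x y z = - l3 x z y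
  ident_a : ∀ x m, l1 (l2' x m) = l2 x (l1 m)
  ident_b : ∀ m n, l2' (l1 m) n = - l2' (l1 n) m
  ident_c : ∀ x y z,
    l2 x (l2 y z) + l2 y (l2 z x) + l2 z (l2 x y) = l1 (l3 x y z)
  ident_d : ∀ x y m,
    l3 x y (l1 m) = l2' x (l2' y m) - l2' y (l2' x m) - l2' (l2 x y) m
  ident_e : ∀ w x y z,
    l3 (l2 w x) y z - l3 (l2 w y) x z + l3 (l2 w z) x y + l3 (l2 x y) w z
      - l3 (l2 x z) w y + l3 (l2 y z) w x
    = l2' w (l3 x y z) - l2' x (l3 w y z) + l2' y (l3 w x z) - l2' z (l3 w x y)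

/-- The undeformed (omni-Lie) 2-term L∞-algebra on `V ⊕ gl(V)`. -/
noncomputable def omniT (V : Type*) [AddCommGroup V] [Module ℝ V] :
    TwoTermLinfty (V × Module.End ℝ V) V where
  l1 := LinearMap.inl ℝ V (Module.End ℝ V)
  l2' := LinearMap.mk₂ ℝ (fun a m => (1/2 : ℝ) • a.2 m)
    (by intros; simp) (by intros; simp; module) (by intros; simp) (by intros; simp; module)
  l2 := LinearMap.mk₂ ℝ
    (fun a b => ((1/2 : ℝ) • (a.2 b.1 - b.2 a.1), a.2 * b.2 - b.2 * a.2))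
    (by intros; ext <;> simp <;> module) (by intros; ext <;> simp <;> module)
    (by intros; ext <;> simp <;> module) (by intros; ext <;> simp <;> module)
  l3 := LinearMap.mk₂ ℝ (fun a b =>
    { toFun := fun c => -(1/4 : ℝ) • ((a.2 * b.2 - b.2 * a.2) c.1 + (b.2 * c.2 - c.2 * b.2) a.1
              + (c.2 * a.2 - a.2 * c.2) b.1)
      map_add' := by intros; simp; module
      map_smul' := by intros; simp; module })
    (by intros; refine LinearMap.ext fun c => ?_; simp; module)
    (by intros; refine LinearMap.ext fun c => ?_; simp; module)
    (by intros; refine LinearMap.ext fun c => ?_; simp; module)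
    (by intros; refine LinearMap.ext fun c => ?_; simp; module)
  skew := by intros; ext <;> simp <;> module
  alt₁ := by intros; simp; module
  alt₂ := by intros; simp; module
  ident_a := by intros; ext <;> simp
  ident_b := by intros; simp
  ident_c := by intros; ext <;> simp <;> module
  ident_d := by intros; simp; module
  ident_e := by intros; simp; module

/-- Transport of a 2-term L∞-algebra along a linear equivalence of the degree 0 part. -/
noncomputable def transT {G H V : Type*} [AddCommGroup G] [Module ℝ G] [AddCommGroup H]
    [Module ℝ H] [AddCommGroup V] [Module ℝ V] (T : TwoTermLinfty H V) (e : G ≃ₗ[ℝ] H) :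
    TwoTermLinfty G V where
  l1 := e.symm.toLinearMap ∘ₗ T.l1
  l2' := T.l2' ∘ₗ e.toLinearMap
  l2 := LinearMap.mk₂ ℝ (fun a b => e.symm (T.l2 (e a) (e b)))
    (by intros; simp) (by intros; simp) (by intros; simp) (by intros; simp)
  l3 := LinearMap.mk₂ ℝ (fun a b => (T.l3 (e a) (e b)) ∘ₗ e.toLinearMap)
    (by intros; refine LinearMap.ext fun c => ?_; simp)
    (by intros; refine LinearMap.ext fun c => ?_; simp)
    (by intros; refine LinearMap.ext fun c => ?_; simp)
    (by intros; refine LinearMap.ext fun c => ?_; simp)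
  skew := by
    intro x y
    simp only [LinearMap.mk₂_apply]
    rw [T.skew, map_neg]
  alt₁ := by intro x y z; exact T.alt₁ _ _ _
  alt₂ := by intro x y z; exact T.alt₂ _ _ _
  ident_a := by intro x m; simp [T.ident_a]
  ident_b := by
    intro m n
    simpa using T.ident_b m n
  ident_c := by
    intro x y z
    simp [← T.ident_c]
  ident_d := by
    intro x y m
    simpa using T.ident_d (e x) (e y) m
  ident_e := by
    intro w x y z
    simpa using T.ident_e (e w) (e x) (e y) (e z)

/-- The change of coordinates `(u, A) ↦ (u, A + ad u)`. -/
noncomputable def shearE (k : Type*) [LieRing k] [LieAlgebra ℝ k] :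
    (k × Module.End ℝ k) ≃ₗ[ℝ] (k × Module.End ℝ k) where
  toFun a := (a.1, a.2 + LieAlgebra.ad ℝ k a.1)
  invFun a := (a.1, a.2 - LieAlgebra.ad ℝ k a.1)
  map_add' := by intros; ext <;> simp; abel
  map_smul' := by intros; ext <;> simp
  left_inv := by intro a; simp
  right_inv := by intro a; simp

/-- Example 4.12 of Lang–Sheng–Xu: the 2-term L∞-algebra obtained from the 2-term
L∞-algebra `(k →^{Id} k, l₂ = [·,·], l₃ = 0)` of a Lie algebra `k`, with
`g̃₋₁ = k`, `g̃₀ = k ⊕ gl(k)`, `l̃₁(m) = (m, −ad_m)`,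
`l̃₂((u,A),m) = ½[u,m] + ½Am`,
`l̃₂((u,A),(v,B)) = ([u,v] + ½(Av − Bu),
  [ad_u,B] + [A,ad_v] + ½(ad_{Bu} − ad_{Av}) + [A,B])`, and
`l̃₃((u,A),(v,B),(w,C)) = −½(C[u,v] + A[v,w] + B[w,u]) − ¼([A,B]w + [B,C]u + [C,A]v)
  − ¼([u,Bw] + [Bu,w] + [v,Cu] + [Cv,u] + [w,Av] + [Aw,v])`. -/
theorem deformed_omniLie_twoTermLinfty (k : Type*) [LieRing k] [LieAlgebra ℝ k] :
    ∃ T : TwoTermLinfty (k × Module.End ℝ k) k,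
      (∀ m : k, T.l1 m = (m, -(LieAlgebra.ad ℝ k m))) ∧
      (∀ (a : k × Module.End ℝ k) (m : k),
        T.l2' a m = (1/2 : ℝ) • ⁅a.1, m⁆ + (1/2 : ℝ) • a.2 m) ∧
      (∀ a b : k × Module.End ℝ k, T.l2 a b =
        (⁅a.1, b.1⁆ + (1/2 : ℝ) • (a.2 b.1 - b.2 a.1),
         (LieAlgebra.ad ℝ k a.1 * b.2 - b.2 * LieAlgebra.ad ℝ k a.1)
           + (a.2 * LieAlgebra.ad ℝ k b.1 - LieAlgebra.ad ℝ k b.1 * a.2)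
           + (1/2 : ℝ) • (LieAlgebra.ad ℝ k (b.2 a.1) - LieAlgebra.ad ℝ k (a.2 b.1))
           + (a.2 * b.2 - b.2 * a.2))) ∧
      (∀ a b c : k × Module.End ℝ k, T.l3 a b c =
        -(1/2 : ℝ) • (c.2 ⁅a.1, b.1⁆ + a.2 ⁅b.1, c.1⁆ + b.2 ⁅c.1, a.1⁆)
          - (1/4 : ℝ) • ((a.2 * b.2 - b.2 * a.2) c.1 + (b.2 * c.2 - c.2 * b.2) a.1
              + (c.2 * a.2 - a.2 * c.2) b.1)
          - (1/4 : ℝ) • (⁅a.1, b.2 c.1⁆ + ⁅b.2 a.1, c.1⁆ + ⁅b.1, c.2 a.1⁆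
              + ⁅c.2 b.1, a.1⁆ + ⁅c.1, a.2 b.1⁆ + ⁅a.2 c.1, b.1⁆)) := by
  refine ⟨transT (omniT k) (shearE k), ?_, ?_, ?_, ?_⟩
  · intro m
    simp [transT, omniT, shearE]
  · intro a m
    simp [transT, omniT, shearE]
    module
  · rintro ⟨u, A⟩ ⟨v, B⟩
    have h : ⁅v, u⁆ = -⁅u, v⁆ := (lie_skew _ _).symm
    refine Prod.ext ?_ ?_
    · simp [-lie_skew, transT, omniT, shearE, h]
      module
    · refine LinearMap.ext fun x => ?_
      simp [-lie_skew, transT, omniT, shearE, h]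
      module
  · rintro ⟨u, A⟩ ⟨v, B⟩ ⟨w, C⟩
    have h1 : ⁅v, u⁆ = -⁅u, v⁆ := (lie_skew _ _).symm
    have h2 : ⁅w, v⁆ = -⁅v, w⁆ := (lie_skew _ _).symm
    have h3 : ⁅u, w⁆ = -⁅w, u⁆ := (lie_skew _ _).symm
    have k1 : ∀ y, ⁅A y, v⁆ = -⁅v, A y⁆ := fun y => (lie_skew _ _).symm
    have k2 : ∀ y, ⁅B y, w⁆ = -⁅w, B y⁆ := fun y => (lie_skew _ _).symm
    have k3 : ∀ y, ⁅C y, u⁆ = -⁅u, C y⁆ := fun y => (lie_skew _ _).symm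
    have j : ⁅u, ⁅v, w⁆⁆ = - ⁅v, ⁅w, u⁆⁆ - ⁅w, ⁅u, v⁆⁆ := by
      have := lie_jacobi u v w
      rw [← sub_eq_zero, ← this]; abel
    simp [-lie_skew, transT, omniT, shearE, h1, h2, h3, k1, k2, k3, j]
    module
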